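/- Let G be an abelian group and let φ : G → G be an endomorphism. If either the Reidemeister number R(φ) or the number of fixed points of the induced map φ̂ on the unitary dual Ĝ (i.e. the number of characters χ of G with χ∘φ = χ) is finite, then the two numbers are equal: R(φ) = #Fix(φ̂). -/

import Mathlib

/-- The `φ`-twisted conjugacy class of `x`:
`x'` is in the class of `x` iff `x' = γ * x * φ(γ)⁻¹` for some `γ`. -/
def twistedClass {G : Type*} [Group G] (φ : G → G) (x : G) : Set G :=
  {x' | ∃ γ : G, x' = γ * x * (φ γ)⁻¹}

/-!
Since `G` is abelian, the `φ`-twisted class of `x` is the coset `x • H`, where `H` is the subgroup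
of all `γ / φ γ`, and a character is fixed by `φ̂` exactly when it is trivial on `H`. So the theorem
compares the quotient `Q = G ⧸ H` with its dual. A finite `Q` has as many characters as elements.
Conversely, the characters of any `Q` separate points, because `ℚ / ℤ` is injective and embeds in
the circle; hence `Q` embeds in its double dual, and is finite when its dual is.
-/

section Characters

/-- The homomorphism `A / ℤ p → B / ℤ f(p)` induced by `f : A → B`; for the inclusion
`ℚ → ℝ` and `p = 1` it makes characters with values in `ℚ / ℤ` into characters with values in
`ℝ / ℤ`. -/
def addCircleMap {A B : Type*} [AddCommGroup A] [AddCommGroup B] (f : A →+ B) (p : A) :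
    AddCircle p →+ AddCircle (f p) :=
  QuotientAddGroup.map _ _ f (by simp [AddSubgroup.zmultiples_le])

theorem addCircleMap_injective {A B : Type*} [AddCommGroup A] [AddCommGroup B] {f : A →+ B}
    (hf : Function.Injective f) (p : A) : Function.Injective (addCircleMap f p) := by
  rw [injective_iff_map_eq_zero]
  rintro ⟨a⟩ ha
  obtain ⟨n, hn⟩ := (AddCircle.coe_eq_zero_iff (f p)).1 ha
  exact (AddCircle.coe_eq_zero_iff p).2 ⟨n, hf (by rw [map_zsmul, hn])⟩

theorem exists_monoidHom_circle_apply_ne_one {Q : Type*} [CommGroup Q] {a : Q} (ha : a ≠ 1) :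
    ∃ χ : Q →* Circle, χ a ≠ 1 := by
  obtain ⟨c, hc⟩ := CharacterModule.exists_character_apply_ne_zero_of_ne_zero
    (a := Additive.ofMul a) (ofMul_eq_zero.not.2 ha)
  let ι : AddCircle (1 : ℚ) →+ AddCircle ((1 : ℚ) : ℝ) :=
    addCircleMap (Rat.castHom ℝ).toAddMonoidHom 1
  have hι : Function.Injective ι := addCircleMap_injective Rat.cast_injective 1
  let χ : Q →* Circle :=
    { toFun x := (ι (c (.ofMul x))).toCircle
      map_one' := by simp
      map_mul' x y := by simp [AddCircle.toCircle_add] }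
  refine ⟨χ, fun hχ ↦ hc (hι ?_)⟩
  apply AddCircle.injective_toCircle (T := ((1 : ℚ) : ℝ)) (by simp)
  simpa [χ] using hχ

theorem monoidHom_eval_circle_injective (Q : Type*) [CommGroup Q] :
    Function.Injective (MonoidHom.eval : Q →* (Q →* Circle) →* Circle) := by
  rw [injective_iff_map_eq_one]
  intro a ha
  by_contra hne
  obtain ⟨χ, hχ⟩ := exists_monoidHom_circle_apply_ne_one hne
  exact hχ (DFunLike.congr_fun ha χ)

theorem nonempty_monoidHom_circle_mulEquiv (Q : Type*) [CommGroup Q] [Finite Q] :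
    Nonempty ((Q →* Circle) ≃* Q) :=
  (CommGroup.monoidHom_mulEquiv_of_hasEnoughRootsOfUnity Q Circle).map
    toUnits.monoidHomCongrRight.trans

theorem finite_monoidHom_circle_iff (Q : Type*) [CommGroup Q] :
    Finite (Q →* Circle) ↔ Finite Q := by
  have finite_dual (P : Type _) [CommGroup P] [Finite P] : Finite (P →* Circle) :=
    .of_equiv P (nonempty_monoidHom_circle_mulEquiv P).some.symm
  exact ⟨fun _ ↦ .of_injective _ (monoidHom_eval_circle_injective Q), fun _ ↦ finite_dual Q⟩

theorem enatCard_monoidHom_circle (Q : Type*) [CommGroup Q] :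
    ENat.card (Q →* Circle) = ENat.card Q := by
  cases finite_or_infinite Q with
  | inl _ => exact ENat.card_congr (nonempty_monoidHom_circle_mulEquiv Q).some.toEquiv
  | inr _ =>
    have : Infinite (Q →* Circle) := by
      rwa [← not_finite_iff_infinite, finite_monoidHom_circle_iff, not_finite_iff_infinite]
    rw [ENat.card_eq_top_of_infinite, ENat.card_eq_top_of_infinite]

end Characters

section TwistedConjugacy

open scoped Pointwise

variable {G : Type*} [CommGroup G] (φ : G →* G)

/-- The subgroup of all `γ / φ γ`, written `(1 - φ) G` in additive notation: the twisted conjugacy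
class of `1`. -/
def twistedCommutatorSubgroup : Subgroup G :=
  (MonoidHom.id G / φ).range

theorem twistedClass_eq_smul (x : G) :
    twistedClass φ x = x • (twistedCommutatorSubgroup φ : Set G) := by
  ext y
  rw [Set.mem_smul_set_iff_inv_smul_mem]
  refine exists_congr fun γ ↦ ?_
  rw [MonoidHom.div_apply, MonoidHom.id_apply, smul_eq_mul, eq_inv_mul_iff_mul_eq, eq_comm,
    mul_comm γ x, mul_assoc, div_eq_mul_inv]

theorem ker_twistedClass :
    Setoid.ker (twistedClass φ) = QuotientGroup.leftRel (twistedCommutatorSubgroup φ) := by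
  ext x y
  rw [Setoid.ker_def, twistedClass_eq_smul, twistedClass_eq_smul, leftCoset_eq_iff,
    QuotientGroup.leftRel_apply]

theorem enatCard_range_twistedClass :
    ENat.card (Set.range (twistedClass φ)) = ENat.card (G ⧸ twistedCommutatorSubgroup φ) := by
  rw [← ENat.card_congr (Setoid.quotientKerEquivRange (f := twistedClass φ)), ker_twistedClass]
  rfl

theorem comp_eq_self_iff_twistedCommutatorSubgroup_le_ker {A : Type*} [Group A] (χ : G →* A) :
    χ.comp φ = χ ↔ twistedCommutatorSubgroup φ ≤ χ.ker := by
  rw [twistedCommutatorSubgroup, MonoidHom.range_le_ker_iff, DFunLike.ext_iff, DFunLike.ext_iff]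
  simp [div_eq_one, eq_comm (a := χ (φ _))]

theorem setOf_comp_eq_self_eq_ker_domRestrictHom (A : Type*) [CommGroup A] :
    {χ : G →* A | χ.comp φ = χ} =
      (MonoidHom.domRestrictHom (twistedCommutatorSubgroup φ) A).ker := by
  ext χ
  rw [Set.mem_ofPred_eq, comp_eq_self_iff_twistedCommutatorSubgroup_le_ker, SetLike.mem_coe,
    MonoidHom.mem_ker, MonoidHom.domRestrictHom_apply, MonoidHom.domRestrict_eq_one_iff]
  rfl

theorem enatCard_setOf_comp_eq_self (A : Type*) [CommGroup A] :
    ENat.card {χ : G →* A | χ.comp φ = χ} =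
      ENat.card (G ⧸ twistedCommutatorSubgroup φ →* A) := by
  rw [setOf_comp_eq_self_eq_ker_domRestrictHom]
  exact ENat.card_congr (MonoidHom.domRestrictHomKerEquiv A _).toEquiv

end TwistedConjugacy

theorem twisted_burnside_frobenius_abelian_general {G : Type*} [CommGroup G] (φ : G →* G) :
    ENat.card (Set.range (twistedClass φ)) = ENat.card {χ : G →* Circle | χ.comp φ = χ} := by
  rw [enatCard_range_twistedClass, enatCard_setOf_comp_eq_self, enatCard_monoidHom_circle]

/-- **Twisted Burnside–Frobenius theorem for abelian groups.**
If `G` is an abelian group and `φ : G → G` an endomorphism, and if either the Reidemeister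
number `R(φ)` (the number of `φ`-conjugacy classes) or the number of fixed points of `φ̂`
on the unitary dual (characters `χ : G →* Circle` with `χ ∘ φ = χ`) is finite, then the
two numbers are equal. -/
theorem twisted_burnside_frobenius_abelian {G : Type*} [CommGroup G] (φ : G →* G)
    (hfin : (Set.range (twistedClass ⇑φ)).Finite ∨
      {χ : G →* Circle | χ.comp φ = χ}.Finite) :
    Nat.card (Set.range (twistedClass ⇑φ)) =
      Nat.card {χ : G →* Circle | χ.comp φ = χ} :=
  congrArg ENat.toNat (twisted_burnside_frobenius_abelian_general φ)
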